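/- arXiv:1705.05510 — 2 statements merged into one kernel-verified Lean document; each statement's English description precedes it below -/
import Mathlib

section
/- Let F : 2^U → 2^V be the map induced by a weighted matching instance (G = (U,V;E), w) in which all matchings have pairwise distinct weights, and let 𝓕 := { F(U') : U' ⊆ U }. Then the set system (V, 𝓕) is an antimatroid: ∅ ∈ 𝓕; for every nonempty X ∈ 𝓕 there exists v ∈ X with X∖{v} ∈ 𝓕; and for all X, Y ∈ 𝓕 one has X ∪ Y ∈ 𝓕. -/
open scoped Classical

/-- `M` is a matching with edges inside the edge set `E`:
no two distinct edges of `M` share a left or a right endpoint. -/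
def IsMatching {U V : Type*} (E M : Finset (U × V)) : Prop :=
  M ⊆ E ∧ ∀ e₁ ∈ M, ∀ e₂ ∈ M, (e₁.1 = e₂.1 ∨ e₁.2 = e₂.2) → e₁ = e₂

/-- The edge set of the subgraph `G[U' ∪ V]` induced by deleting
the left vertices outside `U'` (and their incident edges). -/
noncomputable def restrictL {U V : Type*} (E : Finset (U × V)) (U' : Finset U) : Finset (U × V) :=
  E.filter (fun e => e.1 ∈ U')

/-- The weight of a matching: the sum of the weights of its edges. -/
noncomputable def mWeight {U V : Type*} (w : U × V → ℝ) (M : Finset (U × V)) : ℝ :=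
  ∑ e ∈ M, w e

/-- `M` is a maximum-weight matching of the graph with edge set `E`. -/
def IsMaxMatching {U V : Type*} (E : Finset (U × V)) (w : U × V → ℝ)
    (M : Finset (U × V)) : Prop :=
  IsMatching E M ∧ ∀ M' : Finset (U × V), IsMatching E M' → mWeight w M' ≤ mWeight w M

/-- All matchings of the graph with edge set `E` have pairwise distinct weights. -/
def DistinctWeights {U V : Type*} (E : Finset (U × V)) (w : U × V → ℝ) : Prop :=
  ∀ M₁ M₂ : Finset (U × V), IsMatching E M₁ → IsMatching E M₂ → M₁ ≠ M₂ →
    mWeight w M₁ ≠ mWeight w M₂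

/-- The codomain `{ F(U') : U' ⊆ U }` of the map `F` induced by the weighted
matching instance: the family of all sets of right vertices matched by the
(unique) maximum-weight matching `MM(G, w; U')` of a subgraph `G[U' ∪ V]`. -/
def mmFamily {U V : Type*} (E : Finset (U × V)) (w : U × V → ℝ) : Set (Finset V) :=
  {X | ∃ (U' : Finset U) (M : Finset (U × V)),
    IsMaxMatching (restrictL E U') w M ∧ X = M.image Prod.snd}

/-- cost of a walk -/
noncomputable def pcost {S : Type*} (c : S → S → ℝ) : List S → ℝ
  | [] => 0
  | [_] => 0
  | a :: b :: l => c a b + pcost c (b :: l)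

theorem pcost_append {S : Type*} (c : S → S → ℝ) (a : S) (l₂ : List S) :
    ∀ l₁ : List S, pcost c (l₁ ++ a :: l₂) = pcost c (l₁ ++ [a]) + pcost c (a :: l₂)
  | [] => by simp [pcost]
  | [b] => by simp [pcost]
  | b :: d :: l => by
    have := pcost_append c a l₂ (d :: l)
    simp only [List.cons_append, pcost] at this ⊢
    rw [this]; ring

theorem cycle_perm {S : Type*} [Fintype S] (c : S → S → ℝ) (h0 : ∀ s, c s s = 0) :
    ∀ (l : List S) (b : S), (b :: l).Nodup → ∃ (σ : Equiv.Perm S) (z : S), z ∈ b :: l ∧ σ z = b ∧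
      (∀ x, x ∉ b :: l → σ x = x) ∧
      ∀ y, pcost c (b :: l ++ [y]) = ∑ x, c x (σ x) - c z b + c z y := by
  intro l
  induction l with
  | nil =>
    intro b _
    refine ⟨1, b, by simp, by simp, by simp, ?_⟩
    intro y
    simp [pcost, h0]
  | cons b l ih =>
    intro a hnd
    obtain ⟨ha, hnd'⟩ := List.nodup_cons.1 hnd
    obtain ⟨σ, z, hz, hσz, hfix, hc⟩ := ih b hnd'
    have haz : a ≠ z := fun h => ha (h ▸ hz)
    have hab : a ≠ b := fun h => ha (by simp [h])
    have hσa : σ a = a := hfix a ha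
    refine ⟨Equiv.swap a b * σ, z, List.mem_cons_of_mem _ hz, by simp [hσz], ?_, ?_⟩
    · intro x hx
      have hxa : x ≠ a := fun h => hx (by simp [h])
      have hxb : x ≠ b := fun h => hx (by simp [h])
      have : σ x = x := hfix x (fun h => hx (List.mem_cons_of_mem _ h))
      simp [this, Equiv.swap_apply_of_ne_of_ne hxa hxb]
    · intro y
      have key : ∑ x, (c x ((Equiv.swap a b * σ) x) - c x (σ x)) = c a b + (c z a - c z b) := by
        rw [← Finset.sum_subset (Finset.subset_univ ({a, z} : Finset S))]
        · rw [Finset.sum_pair haz]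
          simp [hσa, hσz, h0]
        · intro x _ hx
          simp only [Finset.mem_insert, Finset.mem_singleton, not_or] at hx
          have h1 : σ x ≠ a := fun h => hx.1 (σ.injective (h.trans hσa.symm))
          have h2 : σ x ≠ b := fun h => hx.2 (σ.injective (h.trans hσz.symm))
          simp [Equiv.swap_apply_of_ne_of_ne h1 h2]
      rw [Finset.sum_sub_distrib] at key
      have := hc y
      simp only [List.cons_append, pcost] at this ⊢
      rw [this]
      linarith

theorem exists_potential {S : Type*} [Fintype S] (c : S → S → ℝ) (h0 : ∀ s, c s s = 0)
    (hσ : ∀ σ : Equiv.Perm S, 0 ≤ ∑ x, c x (σ x)) :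
    ∃ d : S → ℝ, ∀ s t, d s ≤ c s t + d t := by
  have hfin : Set.Finite {l : List S | l.Nodup} :=
    @Set.toFinite _ _ (Finite.of_fintype {l : List S // l.Nodup})
  have hmin : ∀ s : S, ∃ l : List S, (s :: l).Nodup ∧
      ∀ l', (s :: l').Nodup → pcost c (s :: l) ≤ pcost c (s :: l') := by
    intro s
    have hf : Set.Finite {l : List S | (s :: l).Nodup} :=
      hfin.subset (fun l hl => (List.nodup_cons.1 hl).2)
    obtain ⟨l, hl, hl'⟩ := Set.exists_min_image _ (fun l => pcost c (s :: l)) hf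
      ⟨[], by simp⟩
    exact ⟨l, hl, hl'⟩
  choose L hL hLmin using hmin
  refine ⟨fun s => pcost c (s :: L s), fun s t => ?_⟩
  by_cases hs : s ∈ t :: L t
  · obtain ⟨P1, P2, hP⟩ := List.append_of_mem hs
    have hnd : (P1 ++ s :: P2).Nodup := hP ▸ hL t
    have hnd2 : (s :: P2).Nodup := (List.nodup_append.1 hnd).2.1
    have hnd1 : (s :: P1).Nodup := by
      have h3 := List.nodup_middle.1 hnd
      rw [List.nodup_cons] at h3 ⊢
      exact ⟨fun h => h3.1 (by simp [h]), (List.nodup_append.1 hnd).1⟩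
    obtain ⟨σ, z, -, hz, -, hc⟩ := cycle_perm c h0 P1 s hnd1
    have h1 := hc s
    have h2 := hσ σ
    have h3 := pcost_append c s P2 (s :: P1)
    have h4 : c s t + pcost c (t :: L t) = pcost c (s :: P1 ++ s :: P2) := by
      rw [List.cons_append, ← hP]; rfl
    have h5 := hLmin s P2 hnd2
    show pcost c (s :: L s) ≤ c s t + pcost c (t :: L t)
    linarith
  · exact hLmin s (t :: L t) (List.nodup_cons.2 ⟨hs, hL t⟩)

/-- Price certificate. -/
def Cert {U V : Type*} (E : Finset (U × V)) (w : U × V → ℝ) (M : Finset (U × V))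
    (p : V → ℝ) : Prop :=
  IsMatching E M ∧ (∀ v, 0 ≤ p v) ∧ (∀ v, v ∉ M.image Prod.snd → p v = 0) ∧
  (∀ e ∈ M, p e.2 ≤ w e) ∧
  ∀ e ∈ M, ∀ v, (e.1, v) ∈ E → w (e.1, v) - p v ≤ w e - p e.2

theorem matching_subset {U V : Type*} {E M N : Finset (U × V)} (h : IsMatching E M)
    (hN : N ⊆ M) : IsMatching E N :=
  ⟨hN.trans h.1, fun a ha b hb => h.2 a (hN ha) b (hN hb)⟩

theorem cert_max {U V : Type*} {E : Finset (U × V)} {w : U × V → ℝ} {M : Finset (U × V)}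
    {p : V → ℝ} (h : Cert E w M p) : M.image Prod.snd ∈ mmFamily E w := by
  obtain ⟨hM, hp, hp0, hq, hs⟩ := h
  refine ⟨M.image Prod.fst, M, ⟨⟨?_, hM.2⟩, ?_⟩, rfl⟩
  · intro e he
    exact Finset.mem_filter.2 ⟨hM.1 he, Finset.mem_image_of_mem _ he⟩
  · intro M' hM'
    have hg : ∀ e : U × V, ∃ g : U × V, e ∈ M' → g ∈ M ∧ g.1 = e.1 := by
      intro e
      by_cases he : e ∈ M'
      · have := (Finset.mem_filter.1 (hM'.1 he)).2
        obtain ⟨g, hg, hge⟩ := Finset.mem_image.1 this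
        exact ⟨g, fun _ => ⟨hg, hge⟩⟩
      · exact ⟨e, fun h => absurd h he⟩
    choose g hg using hg
    have hinj : Set.InjOn g M' := by
      intro a ha b hb hab
      refine hM'.2 a ha b hb (Or.inl ?_)
      rw [← (hg a ha).2, ← (hg b hb).2, hab]
    have h1 : mWeight w M' ≤ ∑ e ∈ M', ((w (g e) - p (g e).2) + p e.2) := by
      refine Finset.sum_le_sum fun e he => ?_
      have h2 := hs (g e) (hg e he).1 e.2
      rw [(hg e he).2] at h2
      have := h2 (Finset.mem_filter.1 (hM'.1 he)).1
      simp only [Prod.mk.eta] at this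
      linarith
    have h2 : ∑ e ∈ M', (w (g e) - p (g e).2) ≤ ∑ e ∈ M, (w e - p e.2) := by
      rw [← Finset.sum_image (f := fun e => w e - p e.2) hinj]
      refine Finset.sum_le_sum_of_subset_of_nonneg ?_ ?_
      · intro x hx
        obtain ⟨e, he, rfl⟩ := Finset.mem_image.1 hx
        exact (hg e he).1
      · intro e he _
        linarith [hq e he]
    have h3 : ∑ e ∈ M', p e.2 ≤ ∑ e ∈ M, p e.2 := by
      have i1 : Set.InjOn Prod.snd (M' : Set (U × V)) :=
        fun a ha b hb hab => hM'.2 a ha b hb (Or.inr hab)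
      have i2 : Set.InjOn Prod.snd (M : Set (U × V)) :=
        fun a ha b hb hab => hM.2 a ha b hb (Or.inr hab)
      rw [← Finset.sum_image (f := p) i1, ← Finset.sum_image (f := p) i2]
      calc ∑ v ∈ M'.image Prod.snd, p v
          ≤ ∑ v ∈ M'.image Prod.snd ∪ M.image Prod.snd, p v :=
            Finset.sum_le_sum_of_subset_of_nonneg Finset.subset_union_left
              (fun v _ _ => hp v)
        _ = ∑ v ∈ M.image Prod.snd, p v :=
            (Finset.sum_subset Finset.subset_union_right (fun v _ hv => hp0 v hv)).symm
    rw [Finset.sum_add_distrib] at h1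
    rw [Finset.sum_sub_distrib] at h2
    have h4 : mWeight w M = ∑ e ∈ M, w e := rfl
    rw [Finset.sum_sub_distrib] at h1 h2
    linarith

theorem cert_erase {U V : Type*} {E : Finset (U × V)} {w : U × V → ℝ} {M : Finset (U × V)}
    {p : V → ℝ} (h : Cert E w M p) (hne : M.Nonempty) :
    ∃ v ∈ M.image Prod.snd, (M.image Prod.snd).erase v ∈ mmFamily E w := by
  obtain ⟨hM, hp, hp0, hq, hs⟩ := h
  obtain ⟨e0, he0, hmin⟩ := Finset.exists_min_image M (fun e => p e.2) hne
  refine ⟨e0.2, Finset.mem_image_of_mem _ he0, ?_⟩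
  have himg : (M.image Prod.snd).erase e0.2 = (M.erase e0).image Prod.snd := by
    ext v
    simp only [Finset.mem_erase, Finset.mem_image]
    constructor
    · rintro ⟨hv, e, he, rfl⟩
      exact ⟨e, ⟨fun h => hv (by rw [h]), he⟩, rfl⟩
    · rintro ⟨e, ⟨hne, he⟩, rfl⟩
      exact ⟨fun h => hne (hM.2 e he e0 he0 (Or.inr h)), e, he, rfl⟩
  rw [himg]
  refine cert_max (p := fun v => if v ∈ M.image Prod.snd then p v - p e0.2 else 0)
    ⟨matching_subset hM (Finset.erase_subset _ _), ?_, ?_, ?_, ?_⟩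
  · intro v
    dsimp only
    split_ifs with hv
    · obtain ⟨e, he, rfl⟩ := Finset.mem_image.1 hv
      linarith [hmin e he]
    · exact le_rfl
  · intro v hv
    dsimp only
    split_ifs with hv'
    · rw [← himg, Finset.mem_erase] at hv
      have : v = e0.2 := by
        by_contra hne
        exact hv ⟨hne, hv'⟩
      rw [this]; ring
    · rfl
  · intro e he
    have he' := Finset.mem_of_mem_erase he
    dsimp only
    rw [if_pos (Finset.mem_image_of_mem _ he')]
    linarith [hq e he', hp e0.2]
  · intro e he v hv
    have he' := Finset.mem_of_mem_erase he
    dsimp only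
    rw [if_pos (Finset.mem_image_of_mem Prod.snd he')]
    have h1 := hs e he' v hv
    have h2 := hp e0.2
    split_ifs with hv'
    · linarith
    · have := hp0 v hv'
      linarith

theorem cert_union {U V : Type*} {E : Finset (U × V)} {w : U × V → ℝ} {M N : Finset (U × V)}
    {p r : V → ℝ} (h : Cert E w M p) (h' : Cert E w N r)
    (hpos : ∀ e ∈ M, 0 < p e.2) :
    M.image Prod.snd ∪ N.image Prod.snd ∈ mmFamily E w := by
  obtain ⟨hM, hp, hp0, hq, hs⟩ := h
  obtain ⟨hN, hr, hr0, hq', hs'⟩ := h'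
  have hmem : ∀ e, e ∈ M.filter (fun e => r e.2 < p e.2) ∪ N.filter (fun e => p e.2 ≤ r e.2) ↔
      (e ∈ M ∧ r e.2 < p e.2) ∨ (e ∈ N ∧ p e.2 ≤ r e.2) := by
    intro e
    simp [Finset.mem_union, Finset.mem_filter]
  set K := M.filter (fun e => r e.2 < p e.2) ∪ N.filter (fun e => p e.2 ≤ r e.2) with hK
  have himg : M.image Prod.snd ∪ N.image Prod.snd = K.image Prod.snd := by
    ext v
    constructor
    · intro hv
      by_cases hc : r v < p v
      · have : v ∈ M.image Prod.snd := by
          by_contra hv'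
          have := hp0 v hv'
          linarith [hr v]
        obtain ⟨e, he, rfl⟩ := Finset.mem_image.1 this
        exact Finset.mem_image_of_mem _ ((hmem e).2 (Or.inl ⟨he, hc⟩))
      · have : v ∈ N.image Prod.snd := by
          rcases Finset.mem_union.1 hv with hv | hv
          · by_contra hv'
            have h0 := hr0 v hv'
            obtain ⟨e, he, rfl⟩ := Finset.mem_image.1 hv
            exact hc (by rw [h0]; exact hpos e he)
          · exact hv
        obtain ⟨e, he, rfl⟩ := Finset.mem_image.1 this
        exact Finset.mem_image_of_mem _ ((hmem e).2 (Or.inr ⟨he, not_lt.1 hc⟩))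
    · intro hv
      obtain ⟨e, he, rfl⟩ := Finset.mem_image.1 hv
      rcases (hmem e).1 he with ⟨h, -⟩ | ⟨h, -⟩
      · exact Finset.mem_union_left _ (Finset.mem_image_of_mem _ h)
      · exact Finset.mem_union_right _ (Finset.mem_image_of_mem _ h)
  have hcross : ∀ a b : U × V, a ∈ M → r a.2 < p a.2 → b ∈ N → p b.2 ≤ r b.2 →
      ¬ (a.1 = b.1 ∨ a.2 = b.2) := by
    rintro a b ha hac hb hbc (hab | hab)
    · have h1 := hs a ha b.2 (by rw [hab]; exact hN.1 hb)
      have h2 := hs' b hb a.2 (by rw [← hab]; exact hM.1 ha)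
      rw [hab] at h1
      rw [← hab] at h2
      simp only [Prod.mk.eta] at h1 h2
      linarith
    · rw [hab] at hac
      linarith
  rw [himg]
  refine cert_max (p := fun v => max (p v) (r v)) ⟨⟨?_, ?_⟩, ?_, ?_, ?_, ?_⟩
  · intro e he
    rcases (hmem e).1 he with ⟨h, -⟩ | ⟨h, -⟩
    · exact hM.1 h
    · exact hN.1 h
  · intro a ha b hb hab
    rcases (hmem a).1 ha with ⟨h1, h1'⟩ | ⟨h1, h1'⟩ <;>
    rcases (hmem b).1 hb with ⟨h2, h2'⟩ | ⟨h2, h2'⟩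
    · exact hM.2 a h1 b h2 hab
    · exact absurd hab (hcross a b h1 h1' h2 h2')
    · exact absurd (hab.imp Eq.symm Eq.symm) (hcross b a h2 h2' h1 h1')
    · exact hN.2 a h1 b h2 hab
  · intro v
    exact le_max_of_le_left (hp v)
  · intro v hv
    rw [← himg, Finset.mem_union, not_or] at hv
    simp [hp0 v hv.1, hr0 v hv.2]
  · intro e he
    dsimp only
    rcases (hmem e).1 he with ⟨h, h'⟩ | ⟨h, h'⟩
    · rw [max_eq_left h'.le]; exact hq e h
    · rw [max_eq_right h']; exact hq' e h
  · intro e he v hv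
    dsimp only
    have m1 := le_max_left (p v) (r v)
    have m2 := le_max_right (p v) (r v)
    rcases (hmem e).1 he with ⟨h, h'⟩ | ⟨h, h'⟩
    · rw [max_eq_left h'.le]; linarith [hs e h v hv]
    · rw [max_eq_right h']; linarith [hs' e h v hv]

/-- value of assigning `u` to `t` -/
noncomputable def gval {U V : Type*} (E : Finset (U × V)) (w : U × V → ℝ) (u : U) :
    Option V → ℝ
  | none => 0
  | some y => if (u, y) ∈ E ∧ 0 < w (u, y) then w (u, y) else 0

theorem exists_cert {U V : Type*} [Fintype V] {E : Finset (U × V)} {w : U × V → ℝ}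
    {A : Finset U} {M : Finset (U × V)} (h : IsMaxMatching (restrictL E A) w M) :
    ∃ p, Cert E w M p := by
  obtain ⟨hM, hmax⟩ := h
  have hE : ∀ e ∈ M, e ∈ E := fun e he => (Finset.mem_filter.1 (hM.1 he)).1
  have hA : ∀ e ∈ M, e.1 ∈ A := fun e he => (Finset.mem_filter.1 (hM.1 he)).2
  have hw : ∀ e ∈ M, 0 ≤ w e := by
    intro e he
    have := hmax (M.erase e) (matching_subset hM (Finset.erase_subset _ _))
    have h2 := Finset.add_sum_erase M w he
    unfold mWeight at this
    linarith
  have hgw : ∀ e ∈ M, gval E w e.1 (some e.2) = w e := by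
    intro e he
    simp only [gval, Prod.mk.eta]
    split_ifs with hc
    · rfl
    · have := hw e he
      by_contra hne
      exact hc ⟨hE e he, lt_of_le_of_ne this hne⟩
  let val : Option V → Option V → ℝ := fun s t =>
    ∑ e ∈ M.filter (fun e => some e.2 = s), gval E w e.1 t
  have hval : ∀ e ∈ M, ∀ t, val (some e.2) t = gval E w e.1 t := by
    intro e he t
    have : M.filter (fun e' => some e'.2 = some e.2) = {e} := by
      ext e'
      simp only [Finset.mem_filter, Finset.mem_singleton, Option.some.injEq]
      constructor
      · rintro ⟨h1, h2⟩
        exact hM.2 e' h1 e he (Or.inr h2)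
      · rintro rfl
        exact ⟨he, rfl⟩
    simp only [val, this, Finset.sum_singleton]
  have hval0 : ∀ v, v ∉ M.image Prod.snd → ∀ t, val (some v) t = 0 := by
    intro v hv t
    refine Finset.sum_eq_zero fun e he => ?_
    obtain ⟨h1, h2⟩ := Finset.mem_filter.1 he
    exact absurd (Finset.mem_image.2 ⟨e, h1, Option.some.inj h2⟩) hv
  have hvaln : ∀ t, val none t = 0 := by
    intro t
    refine Finset.sum_eq_zero fun e he => ?_
    exact absurd (Finset.mem_filter.1 he).2 (by simp)
  have hsum : ∀ σ : Option V → Option V,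
      ∑ s, val s (σ s) = ∑ e ∈ M, gval E w e.1 (σ (some e.2)) := by
    intro σ
    rw [← Finset.sum_fiberwise M (fun e => some e.2)]
    refine Finset.sum_congr rfl fun s _ => ?_
    refine Finset.sum_congr rfl fun e he => ?_
    rw [(Finset.mem_filter.1 he).2]
  obtain ⟨d, hd⟩ := exists_potential (fun s t => val s s - val s t) (fun s => sub_self _) (by
    intro σ
    rw [Finset.sum_sub_distrib, hsum σ, hsum (fun s => s), Finset.sum_congr rfl hgw]
    obtain ⟨P, hP⟩ : ∃ P : U × V → Prop, ∀ e, P e ↔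
        ∃ y, σ (some e.2) = some y ∧ (e.1, y) ∈ E ∧ 0 < w (e.1, y) := ⟨_, fun _ => Iff.rfl⟩
    let B := M.filter P
    let f : U × V → U × V := fun e => (e.1, (σ (some e.2)).getD e.2)
    have hf : ∀ e ∈ B, e ∈ M ∧ σ (some e.2) = some (f e).2 ∧ f e ∈ E ∧ 0 < w (f e) := by
      intro e he
      obtain ⟨h1, hPe⟩ := Finset.mem_filter.1 he
      obtain ⟨y, h2, h3, h4⟩ := (hP e).1 hPe
      have : f e = (e.1, y) := by simp [f, h2]
      rw [this]
      exact ⟨h1, h2, h3, h4⟩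
    have hinj : Set.InjOn f B := by
      intro a ha b hb hab
      have h : (f a).1 = (f b).1 := by rw [hab]
      exact hM.2 a (hf a ha).1 b (hf b hb).1 (Or.inl h)
    have hmat : IsMatching (restrictL E A) (B.image f) := by
      constructor
      · intro x hx
        obtain ⟨e, he, rfl⟩ := Finset.mem_image.1 hx
        exact Finset.mem_filter.2 ⟨(hf e he).2.2.1, hA e (hf e he).1⟩
      · intro x hx y hy hxy
        obtain ⟨a, ha, rfl⟩ := Finset.mem_image.1 hx
        obtain ⟨b, hb, rfl⟩ := Finset.mem_image.1 hy
        have : a = b := by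
          refine hM.2 a (hf a ha).1 b (hf b hb).1 ?_
          rcases hxy with h | h
          · exact Or.inl h
          · right
            have h1 := (hf a ha).2.1
            rw [h, ← (hf b hb).2.1] at h1
            exact Option.some.inj (σ.injective h1)
        rw [this]
    have h1 := hmax _ hmat
    unfold mWeight at h1
    rw [Finset.sum_image hinj] at h1
    have h2 : ∑ e ∈ M, gval E w e.1 (σ (some e.2)) = ∑ e ∈ B, w (f e) := by
      symm
      rw [Finset.sum_filter]
      refine Finset.sum_congr rfl fun e he => ?_
      cases hc : σ (some e.2) with
      | none => simp [gval, hP, hc]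
      | some y => simp [gval, f, hP, hc]
    rw [h2]
    linarith)
  have hnn : ∀ v, 0 ≤ d (some v) - d none := by
    intro v
    have := hd none (some v)
    simp only [hvaln] at this
    linarith
  refine ⟨fun v => d (some v) - d none, ⟨⟨fun e he => hE e he, hM.2⟩, hnn, ?_, ?_, ?_⟩⟩
  · intro v hv
    have h1 := hd (some v) none
    simp only [hval0 v hv] at h1
    have := hnn v
    dsimp only
    linarith
  · intro e he
    have h1 := hd (some e.2) none
    simp only [hval e he, hgw e he] at h1
    simp only [gval] at h1
    dsimp only
    linarith
  · intro e he v hv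
    have h1 := hd (some e.2) (some v)
    simp only [hval e he, hgw e he] at h1
    have h2 : w (e.1, v) ≤ gval E w e.1 (some v) := by
      simp only [gval]
      split_ifs with hc
      · exact le_rfl
      · by_contra hlt
        exact hc ⟨hv, not_le.1 hlt⟩
    dsimp only
    linarith

theorem exists_cert_pos {U V : Type*} [Fintype V] {E : Finset (U × V)} {w : U × V → ℝ}
    (hdist : DistinctWeights E w)
    {A : Finset U} {M : Finset (U × V)} (h : IsMaxMatching (restrictL E A) w M) :
    ∃ p, Cert E w M p ∧ ∀ e ∈ M, 0 < p e.2 := by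
  have hres : ∀ N, IsMatching (restrictL E A) N → IsMatching E N :=
    fun N hN => ⟨hN.1.trans (Finset.filter_subset _ _), hN.2⟩
  have hlt : ∀ N, IsMatching (restrictL E A) N → N ≠ M → mWeight w N < mWeight w M :=
    fun N hN hne => lt_of_le_of_ne (h.2 N hN) (hdist N M (hres N hN) (hres M h.1) hne)
  obtain ⟨δ, hδ, hgap⟩ : ∃ δ : ℝ, 0 < δ ∧ ∀ N, IsMatching (restrictL E A) N → N ≠ M →
      mWeight w N + δ ≤ mWeight w M := by
    let T := (restrictL E A).powerset.filter (fun N => IsMatching (restrictL E A) N ∧ N ≠ M)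
    have hT : ∀ N, IsMatching (restrictL E A) N → N ≠ M → N ∈ T := fun N h1 h2 =>
      Finset.mem_filter.2 ⟨Finset.mem_powerset.2 h1.1, h1, h2⟩
    by_cases hne : T.Nonempty
    · obtain ⟨N0, hN0, hm⟩ := Finset.exists_max_image T (mWeight w) hne
      obtain ⟨-, h1, h2⟩ := Finset.mem_filter.1 hN0
      refine ⟨mWeight w M - mWeight w N0, sub_pos.2 (hlt N0 h1 h2), fun N h3 h4 => ?_⟩
      linarith [hm N (hT N h3 h4)]
    · exact ⟨1, one_pos, fun N h3 h4 => absurd ⟨N, hT N h3 h4⟩ hne⟩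
  obtain ⟨ε, hε, hεδ⟩ : ∃ ε : ℝ, 0 < ε ∧ ε * (M.card : ℝ) ≤ δ := by
    have hc : (0 : ℝ) < (M.card : ℝ) + 1 := by positivity
    refine ⟨δ / ((M.card : ℝ) + 1), by positivity, ?_⟩
    rw [div_mul_eq_mul_div, div_le_iff₀ hc]
    nlinarith
  let w' : U × V → ℝ := fun e => if e ∈ M then w e - ε else w e
  have hw'M : ∀ e ∈ M, w' e = w e - ε := fun e he => if_pos he
  have hw'le : ∀ e, w' e ≤ w e := by
    intro e
    dsimp only [w']
    split_ifs
    · linarith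
    · exact le_rfl
  have hmax' : IsMaxMatching (restrictL E A) w' M := by
    refine ⟨h.1, fun N hN => ?_⟩
    by_cases hne : N = M
    · rw [hne]
    · have h1 : mWeight w' N ≤ mWeight w N := Finset.sum_le_sum fun e _ => hw'le e
      have h2 : mWeight w' M = mWeight w M - ε * (M.card : ℝ) := by
        unfold mWeight
        rw [Finset.sum_congr rfl hw'M, Finset.sum_sub_distrib]
        simp [mul_comm]
      linarith [hgap N hN hne]
  obtain ⟨p, hM, hp, hp0, hq, hs⟩ := exists_cert hmax'
  have hin : ∀ e ∈ M, e.2 ∈ M.image Prod.snd := fun e he => Finset.mem_image_of_mem _ he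
  refine ⟨fun v => if v ∈ M.image Prod.snd then p v + ε else p v,
    ⟨hM, ?_, ?_, ?_, ?_⟩, ?_⟩
  · intro v
    dsimp only
    split_ifs <;> linarith [hp v]
  · intro v hv
    dsimp only
    rw [if_neg hv]
    exact hp0 v hv
  · intro e he
    dsimp only
    rw [if_pos (hin e he)]
    have := hq e he
    rw [hw'M e he] at this
    linarith
  · intro e he v hv
    dsimp only
    rw [if_pos (hin e he)]
    have h1 := hs e he v hv
    rw [hw'M e he] at h1
    split_ifs with hv'
    · have : w (e.1, v) - ε ≤ w' (e.1, v) := by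
        dsimp only [w']
        split_ifs <;> linarith
      linarith
    · have : w' (e.1, v) = w (e.1, v) :=
        if_neg (fun hm => hv' (hin _ hm))
      linarith
  · intro e he
    dsimp only
    rw [if_pos (hin e he)]
    linarith [hp e.2]

/-- The set system `(V, 𝓕)` with `𝓕 = { F(U') : U' ⊆ U }` induced by a
weighted matching instance with pairwise distinct matching weights is an
antimatroid: `∅ ∈ 𝓕`, `𝓕` is accessible, and `𝓕` is union-closed. -/
theorem mm_family_antimatroid {U V : Type*} [Fintype U] [Fintype V]
    (E : Finset (U × V)) (w : U × V → ℝ)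
    (hdist : DistinctWeights E w) :
    (∅ ∈ mmFamily E w) ∧
    (∀ X ∈ mmFamily E w, X ≠ ∅ →
      ∃ v ∈ X, X.erase v ∈ mmFamily E w) ∧
    (∀ X ∈ mmFamily E w, ∀ Y ∈ mmFamily E w,
      X ∪ Y ∈ mmFamily E w) := by
  refine ⟨?_, ?_, ?_⟩
  · have := cert_max (E := E) (w := w) (M := ∅) (p := fun _ => 0)
      ⟨⟨by simp, by simp⟩, by simp, by simp, by simp, by simp⟩
    simpa using this
  · rintro X ⟨A, M, hM, rfl⟩ hne
    obtain ⟨p, hp, -⟩ := exists_cert_pos hdist hM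
    refine cert_erase hp ?_
    rw [Finset.nonempty_iff_ne_empty]
    rintro rfl
    exact hne (by simp)
  · rintro X ⟨A, M, hM, rfl⟩ Y ⟨B, N, hN, rfl⟩
    obtain ⟨p, hp, hpos⟩ := exists_cert_pos hdist hM
    obtain ⟨r, hr, -⟩ := exists_cert_pos hdist hN
    exact cert_union hp hr hpos
end

section
/- Let F : 2^U → 2^V be the map induced by a weighted matching instance (G = (U,V;E), w) in which all matchings have pairwise distinct weights, and let 𝓕 := { F(U') : U' ⊆ U }. Then 𝓕 is union-closed: for all U₁, U₂ ⊆ U there exists U* ⊆ U such that F(U*) = F(U₁) ∪ F(U₂); in particular F(U₁) ∪ F(U₂) ∈ 𝓕. -/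
open scoped Classical

def pwt {α : Type*} (d : α → α → ℝ) : List α → ℝ
  | [] => 0
  | [_] => 0
  | b :: a :: l => d a b + pwt d (a :: l)

lemma pwt_split {α : Type*} (d : α → α → ℝ) (c : α) (l₂ : List α) :
    ∀ l₁ : List α, pwt d (l₁ ++ c :: l₂) = pwt d (l₁ ++ [c]) + pwt d (c :: l₂)
  | [] => by simp [pwt]
  | [b] => by simp [pwt]
  | b :: a :: l => by
    have := pwt_split d c l₂ (a :: l)
    simp only [List.cons_append, pwt] at this ⊢
    linarith

lemma pwt_perm {α : Type*} (d : α → α → ℝ) (s : α → α) (z : α) :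
    ∀ l : List α, List.IsChain (fun b a => s b = a) (l ++ [z]) →
      pwt d (l ++ [z]) = (l.map (fun x => d (s x) x)).sum
  | [] => by simp [pwt]
  | [b] => by
    intro h
    simp at h
    simp [pwt, h]
  | b :: a :: l => by
    intro h
    simp only [List.cons_append, List.isChain_cons_cons] at h
    have := pwt_perm d s z (a :: l) (by simpa using h.2)
    simp only [List.cons_append, pwt, List.map_cons, List.sum_cons] at this ⊢
    rw [this, h.1]

lemma cyc_le {α : Type*} [Fintype α] (R : α → α → Prop) (d : α → α → ℝ)
    (hR : ∀ i, R i i) (hd : ∀ i, d i i = 0)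
    (hs : ∀ s : Equiv.Perm α, (∀ i, R i (s i)) → ∑ i, d i (s i) ≤ 0)
    (v z : α) (l : List α) (hn : (v :: (l ++ [z])).Nodup)
    (hc : List.IsChain (fun b a => R a b) (v :: (l ++ [z]))) (hvz : R v z) :
    pwt d (v :: (l ++ [z])) + d v z ≤ 0 := by
  set c := v :: (l ++ [z]) with hcdef
  set s := c.formPerm with hsdef
  have hlast : s z = v := by
    have := List.formPerm_apply_getLast v (l ++ [z])
    simpa [hsdef, hcdef] using this
  have hchain : List.IsChain (fun b a => s b = a) c := by
    rw [List.isChain_iff_getElem]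
    intro i hi
    exact List.formPerm_apply_lt_getElem _ hn _ _
  have hw := pwt_perm d s z (v :: l) (by simpa [hcdef] using hchain)
  have hRs : ∀ x, R (s x) x := by
    intro x
    by_cases hx : x ∈ c
    · by_cases hxz : x = z
      · subst hxz; rw [hlast]; exact hvz
      · obtain ⟨i, hi, rfl⟩ := List.getElem_of_mem hx
        have hi' : i + 1 < c.length := by
          by_contra hcon
          apply hxz
          have : i = c.length - 1 := by omega
          subst this
          rw [← List.getLast_eq_getElem (by simp [hcdef])]
          simp [hcdef]
        rw [hsdef, List.formPerm_apply_lt_getElem _ hn _ hi']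
        rw [List.isChain_iff_getElem] at hc
        exact hc i hi'
    · rw [hsdef, List.formPerm_apply_of_notMem hx]; exact hR x
  have h1 := hs s⁻¹ (fun i => by simpa using hRs (s⁻¹ i))
  have h2 : ∑ i, d i (s⁻¹ i) = ∑ x, d (s x) x := by
    rw [← Equiv.sum_comp s]; simp
  have h3 : ∑ x, d (s x) x = ∑ x ∈ c.toFinset, d (s x) x := by
    symm
    apply Finset.sum_subset (Finset.subset_univ _)
    intro x _ hx
    rw [hsdef, List.formPerm_apply_of_notMem (by simpa using hx), hd]
  rw [List.sum_toFinset _ hn] at h3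
  have h4 : (c.map (fun x => d (s x) x)).sum
      = ((v :: l).map (fun x => d (s x) x)).sum + d v z := by
    simp [hcdef, hlast, add_assoc]
  have hw' : pwt d c = ((v :: l).map (fun x => d (s x) x)).sum := hw
  linarith

lemma exists_potential_s10 {α : Type*} [Fintype α] (R : α → α → Prop) (d : α → α → ℝ)
    (hR : ∀ i, R i i) (hd : ∀ i, d i i = 0)
    (hs : ∀ s : Equiv.Perm α, (∀ i, R i (s i)) → ∑ i, d i (s i) ≤ 0) :
    ∃ p : α → ℝ, ∀ i j, R i j → p i + d i j ≤ p j := by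
  have hfin : {l : List α | l.Nodup}.Finite := by
    exact (List.finite_length_le α (Fintype.card α)).subset (fun l hl => List.Nodup.length_le_card hl)
  have key : ∀ v : α, ∃ l : List α, ((v :: l).Nodup ∧
      List.IsChain (fun b a => R a b) (v :: l)) ∧
      ∀ l' : List α, ((v :: l').Nodup ∧ List.IsChain (fun b a => R a b) (v :: l')) →
        pwt d (v :: l') ≤ pwt d (v :: l) := by
    intro v
    have hf : {l : List α | (v :: l).Nodup ∧
      List.IsChain (fun b a => R a b) (v :: l)}.Finite :=
      hfin.subset (fun l hl => (List.nodup_cons.1 hl.1).2)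
    obtain ⟨l, hl, hmax⟩ := Set.exists_max_image _ (fun l => pwt d (v :: l)) hf
      ⟨[], by simp⟩
    exact ⟨l, hl, hmax⟩
  choose L hL hmax using key
  refine ⟨fun v => pwt d (v :: L v), fun v z hvz => ?_⟩
  by_cases hz : z ∈ v :: L v
  · obtain ⟨l₁, l₂, he⟩ := List.append_of_mem hz
    have hn := (hL v).1
    have hc := (hL v).2
    dsimp only
    rw [he] at hn hc ⊢
    rw [List.isChain_split] at hc
    rw [pwt_split]
    have hz2 := hmax z l₂ ⟨(List.nodup_append.1 hn).2.1, hc.2⟩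
    cases l₁ with
    | nil =>
      simp at he
      rw [he.1, hd]
      simp [pwt] at hz2 ⊢
      exact hz2
    | cons b l =>
      obtain ⟨rfl, -⟩ := List.cons.inj he
      have hn' : (v :: (l ++ [z])).Nodup := by
        refine List.Nodup.sublist ?_ hn
        simp
      have := cyc_le R d hR hd hs v z l hn' (by simpa using hc.1) hvz
      simp only [List.cons_append] at *
      linarith
  · have := hmax z (v :: L v) ⟨List.nodup_cons.2 ⟨hz, (hL v).1⟩,
      List.isChain_cons_cons.2 ⟨hvz, (hL v).2⟩⟩
    simp only [pwt] at this
    linarith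

lemma exists_prices {U V : Type*} [Fintype U] [Fintype V]
    (E : Finset (U × V)) (w : U × V → ℝ) (M : Finset (U × V)) (hM : IsMatching E M)
    (huniq : ∀ M', IsMatching E M' → M' ≠ M → mWeight w M' < mWeight w M) :
    ∃ p : V → ℝ, (∀ v, 0 ≤ p v) ∧ (∀ v, v ∉ M.image Prod.snd → p v = 0) ∧
      ∀ u v, (u, v) ∈ M → p v ≤ w (u, v) ∧
        ∀ v', v' ≠ v → (u, v') ∈ E → w (u, v') - p v' < w (u, v) - p v := by
  rcases M.eq_empty_or_nonempty with rfl | hne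
  · exact ⟨fun _ => 0, by simp, by simp, by simp⟩
  haveI : Nonempty U := ⟨hne.choose.1⟩
  set X := M.image Prod.snd with hX
  have hmu : ∀ v : V, ∃ u : U, v ∈ X → (u, v) ∈ M := by
    intro v
    by_cases hv : v ∈ X
    · obtain ⟨e, he, rfl⟩ := Finset.mem_image.1 hv
      exact ⟨e.1, fun _ => he⟩
    · exact ⟨Classical.arbitrary U, fun h => absurd h hv⟩
  choose μ hμ using hmu
  have hμ' : ∀ u v, (u, v) ∈ M → v ∈ X ∧ μ v = u := by
    intro u v h
    have hv : v ∈ X := Finset.mem_image.2 ⟨_, h, rfl⟩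
    exact ⟨hv, congrArg Prod.fst (hM.2 _ (hμ v hv) _ h (Or.inr rfl))⟩
  have hμinj : ∀ v ∈ X, ∀ v' ∈ X, μ v = μ v' → v = v' := by
    intro v hv v' hv' h
    exact congrArg Prod.snd (hM.2 _ (hμ v hv) _ (hμ v' hv') (Or.inl h))
  have hMX : M = X.image (fun v => (μ v, v)) := by
    ext ⟨u, v⟩
    simp only [Finset.mem_image, Prod.mk.injEq]
    constructor
    · intro h
      exact ⟨v, (hμ' u v h).1, (hμ' u v h).2, rfl⟩
    · rintro ⟨v', hv', rfl, rfl⟩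
      exact hμ _ hv'
  have hwM : mWeight w M = ∑ v ∈ X, w (μ v, v) := by
    rw [mWeight]
    conv_lhs => rw [hMX]
    rw [Finset.sum_image]
    intro a _ b _ h
    exact congrArg Prod.snd h
  -- the gap
  obtain ⟨δ, hδ, hgap⟩ : ∃ δ : ℝ, 0 < δ ∧ ∀ M', IsMatching E M' → M' ≠ M →
      mWeight w M' + δ ≤ mWeight w M := by
    set S := Finset.univ.filter (fun M' : Finset (U × V) => IsMatching E M' ∧ M' ≠ M) with hS
    rcases S.eq_empty_or_nonempty with h0 | h0
    · refine ⟨1, one_pos, fun M' h1 h2 => ?_⟩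
      have : M' ∈ S := Finset.mem_filter.2 ⟨Finset.mem_univ _, h1, h2⟩
      simp [h0] at this
    · obtain ⟨N, hN, hmax⟩ := Finset.exists_max_image S (mWeight w) h0
      have hN' : IsMatching E N ∧ N ≠ M := (Finset.mem_filter.1 hN).2
      refine ⟨mWeight w M - mWeight w N, by linarith [huniq N hN'.1 hN'.2], fun M' h1 h2 => ?_⟩
      have := hmax M' (Finset.mem_filter.2 ⟨Finset.mem_univ _, h1, h2⟩)
      linarith
  obtain ⟨ε, hεpos, hεX⟩ : ∃ ε : ℝ, 0 < ε ∧ (X.card : ℝ) * ε ≤ δ := by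
    have h0 : (0 : ℝ) ≤ (X.card : ℝ) := Nat.cast_nonneg _
    generalize (X.card : ℝ) = n at h0
    clear hMX
    have h1 : 0 < n + 1 := by linarith
    refine ⟨δ / (n + 1), div_pos hδ h1, ?_⟩
    rw [← mul_div_assoc, div_le_iff₀ h1]
    nlinarith
  let R : Option V → Option V → Prop := fun a b =>
    match a, b with
    | some v, some v' => v = v' ∨ (v ∈ X ∧ (μ v, v') ∈ E)
    | _, _ => True
  let d : Option V → Option V → ℝ := fun a b =>
    match a, b with
    | some v, some v' => if v = v' then 0 else w (μ v, v') - w (μ v, v) + ε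
    | some v, none => if v ∈ X then - w (μ v, v) else 0
    | none, _ => 0
  obtain ⟨q, hq⟩ := exists_potential_s10 R d
    (by intro i; cases i <;> simp [R]) (by intro i; cases i <;> simp [d]) (by
      intro s hsR
      rw [Fintype.sum_option]
      have hd0 : d none (s none) = 0 := rfl
      rw [hd0, zero_add]
      have hout : ∀ v, v ∉ X → d (some v) (s (some v)) = 0 := by
        intro v hv
        have := hsR (some v)
        cases hsv : s (some v) with
        | none => simp [d, hv]
        | some v' =>
          rw [hsv] at this
          have h2 : v = v' := by simpa [R, hv] using this
          simp [d, h2]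
      have hsum : ∑ v, d (some v) (s (some v)) = ∑ v ∈ X, d (some v) (s (some v)) := by
        symm
        exact Finset.sum_subset (Finset.subset_univ _) (fun v _ hv => hout v hv)
      rw [hsum]
      set Y := X.filter (fun v => s (some v) ≠ none) with hY
      set f : V → U × V := fun v => (μ v, (s (some v)).getD v) with hf
      set N := Y.image f with hN
      have hYX : ∀ v ∈ Y, v ∈ X ∧ ∃ v', s (some v) = some v' ∧ f v = (μ v, v') := by
        intro v hv
        have := Finset.mem_filter.1 hv
        obtain ⟨v', hv'⟩ := Option.ne_none_iff_exists'.1 this.2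
        exact ⟨this.1, v', hv', by simp [hf, hv']⟩
      have hNm : IsMatching E N := by
        constructor
        · intro e he
          obtain ⟨v, hv, rfl⟩ := Finset.mem_image.1 he
          obtain ⟨hvX, v', hv', hfv⟩ := hYX v hv
          rw [hfv]
          have := hsR (some v)
          rw [hv'] at this
          rcases this with h | h
          · subst h; exact hM.1 (hμ v hvX)
          · exact h.2
        · intro e₁ h₁ e₂ h₂ h
          obtain ⟨a, ha, rfl⟩ := Finset.mem_image.1 h₁
          obtain ⟨b, hb, rfl⟩ := Finset.mem_image.1 h₂
          obtain ⟨haX, a', ha', hfa⟩ := hYX a ha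
          obtain ⟨hbX, b', hb', hfb⟩ := hYX b hb
          have : a = b := by
            rcases h with h | h
            · rw [hfa, hfb] at h
              exact hμinj a haX b hbX h
            · rw [hfa, hfb] at h
              have h' : a' = b' := h
              have : s (some a) = s (some b) := by rw [ha', hb', h']
              exact Option.some.inj (s.injective this)
          rw [this]
      have hwN : mWeight w N = ∑ v ∈ X, if s (some v) ≠ none then w (f v) else 0 := by
        rw [mWeight, hN, Finset.sum_image, hY, Finset.sum_filter]
        intro a ha b hb h
        exact hμinj a (hYX a ha).1 b (hYX b hb).1 (congrArg Prod.fst h)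
      by_cases hNM : N = M
      · have : ∑ v ∈ X, d (some v) (s (some v)) ≤
            ∑ v ∈ X, ((if s (some v) ≠ none then w (f v) else 0) - w (μ v, v)) := by
          apply Finset.sum_le_sum
          intro v hv
          cases hsv : s (some v) with
          | none => simp [d, hv]
          | some v' =>
            have hfm : f v ∈ M := by
              rw [← hNM]
              exact Finset.mem_image_of_mem _ (Finset.mem_filter.2 ⟨hv, by simp [hsv]⟩)
            have hfv : f v = (μ v, v') := by simp [hf, hsv]
            have : v = v' := by
              rw [hfv] at hfm
              exact congrArg Prod.snd (hM.2 _ (hμ v hv) _ hfm (Or.inl rfl))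
            rw [hfv]
            simp [d, this]
        rw [Finset.sum_sub_distrib, ← hwN, ← hwM, hNM] at this
        linarith
      · have : ∑ v ∈ X, d (some v) (s (some v)) ≤
            ∑ v ∈ X, (((if s (some v) ≠ none then w (f v) else 0) - w (μ v, v)) + ε) := by
          apply Finset.sum_le_sum
          intro v hv
          cases hsv : s (some v) with
          | none => simp [d, hv, hεpos.le]
          | some v' =>
            have hfv : f v = (μ v, v') := by simp [hf, hsv]
            rw [hfv]
            by_cases h : v = v'
            · simp [d, h, hεpos.le]
            · simp [d, h]
        rw [Finset.sum_add_distrib, Finset.sum_sub_distrib, ← hwN, ← hwM, Finset.sum_const,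
          nsmul_eq_mul] at this
        linarith [hgap N hNm hNM])
  have hpos : ∀ v, 0 ≤ q (some v) - q none := by
    intro v
    have := hq none (some v) trivial
    simp [d] at this
    linarith
  refine ⟨fun v => q (some v) - q none, hpos, ?_, ?_⟩
  · intro v hv
    have := hq (some v) none trivial
    simp [d, hv] at this
    have := hpos v
    dsimp only
    linarith
  · intro u v huv
    obtain ⟨hv, rfl⟩ := hμ' u v huv
    constructor
    · have := hq (some v) none trivial
      simp [d, hv] at this
      linarith
    · intro v' hne hE
      have := hq (some v) (some v') (Or.inr ⟨hv, hE⟩)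
      simp [d, hne.symm] at this
      linarith

lemma prices_of_max {U V : Type*} [Fintype U] [Fintype V]
    (E : Finset (U × V)) (w : U × V → ℝ) (hdist : DistinctWeights E w)
    (U' : Finset U) (M : Finset (U × V)) (hM : IsMaxMatching (restrictL E U') w M) :
    ∃ p : V → ℝ, (∀ v, 0 ≤ p v) ∧ (∀ v, v ∉ M.image Prod.snd → p v = 0) ∧
      ∀ u v, (u, v) ∈ M → (u, v) ∈ E ∧ p v ≤ w (u, v) ∧
        ∀ v', v' ≠ v → (u, v') ∈ E → w (u, v') - p v' < w (u, v) - p v := by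
  have hsub : ∀ N, IsMatching (restrictL E U') N → IsMatching E N :=
    fun N hN => ⟨hN.1.trans (Finset.filter_subset _ _), hN.2⟩
  obtain ⟨p, h1, h2, h3⟩ := exists_prices (restrictL E U') w M hM.1 (fun M' hM' hne =>
    lt_of_le_of_ne (hM.2 M' hM') (hdist M' M (hsub _ hM') (hsub _ hM.1) hne))
  refine ⟨p, h1, h2, fun u v huv => ?_⟩
  have hm := Finset.mem_filter.1 (hM.1.1 huv)
  exact ⟨hm.1, (h3 u v huv).1, fun v' hne hE =>
    (h3 u v huv).2 v' hne (Finset.mem_filter.2 ⟨hE, hm.2⟩)⟩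

/-- The family `𝓕 = { F(U') : U' ⊆ U }` induced by a weighted matching
instance with pairwise distinct matching weights is union-closed: for all
`U₁, U₂ ⊆ U` there exists `U* ⊆ U` with `F(U*) = F(U₁) ∪ F(U₂)`;
in particular `F(U₁) ∪ F(U₂) ∈ 𝓕`. -/
theorem mm_family_union_closed {U V : Type*} [Fintype U] [Fintype V]
    (E : Finset (U × V)) (w : U × V → ℝ)
    (hdist : DistinctWeights E w) :
    ∀ (U₁ U₂ : Finset U) (M₁ M₂ : Finset (U × V)),
      IsMaxMatching (restrictL E U₁) w M₁ →
      IsMaxMatching (restrictL E U₂) w M₂ →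
      (∃ (Ustar : Finset U) (Mstar : Finset (U × V)),
          IsMaxMatching (restrictL E Ustar) w Mstar ∧
          Mstar.image Prod.snd = M₁.image Prod.snd ∪ M₂.image Prod.snd) ∧
      (M₁.image Prod.snd ∪ M₂.image Prod.snd) ∈ mmFamily E w := by
  intro U₁ U₂ M₁ M₂ hM₁ hM₂
  suffices h : ∃ (Ustar : Finset U) (Mstar : Finset (U × V)),
          IsMaxMatching (restrictL E Ustar) w Mstar ∧
          Mstar.image Prod.snd = M₁.image Prod.snd ∪ M₂.image Prod.snd by
    obtain ⟨A, N, h1, h2⟩ := h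
    exact ⟨⟨A, N, h1, h2⟩, A, N, h1, h2.symm⟩
  obtain ⟨p₁, hp₁, hz₁, hd₁⟩ := prices_of_max E w hdist U₁ M₁ hM₁
  obtain ⟨p₂, hp₂, hz₂, hd₂⟩ := prices_of_max E w hdist U₂ M₂ hM₂
  set X := M₁.image Prod.snd ∪ M₂.image Prod.snd with hX
  have key : ∀ v ∈ X, ∃ u, ((u, v) ∈ M₁ ∧ p₂ v ≤ p₁ v) ∨ ((u, v) ∈ M₂ ∧ p₁ v ≤ p₂ v) := by
    intro v hv
    by_cases h1 : v ∈ M₁.image Prod.snd ∧ p₂ v ≤ p₁ v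
    · obtain ⟨e, he, rfl⟩ := Finset.mem_image.1 h1.1
      exact ⟨e.1, Or.inl ⟨he, h1.2⟩⟩
    · have h2 : v ∈ M₂.image Prod.snd ∧ p₁ v ≤ p₂ v := by
        by_cases h : v ∈ M₁.image Prod.snd
        · have hlt : p₁ v < p₂ v := by
            by_contra hc
            exact h1 ⟨h, not_lt.1 hc⟩
          refine ⟨?_, hlt.le⟩
          by_contra hc
          have := hz₂ v hc
          have := hp₁ v
          linarith
        · refine ⟨(Finset.mem_union.1 hv).resolve_left h, ?_⟩
          rw [hz₁ v h]; exact hp₂ v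
      obtain ⟨e, he, rfl⟩ := Finset.mem_image.1 h2.1
      exact ⟨e.1, Or.inr ⟨he, h2.2⟩⟩
  have clash : ∀ u v v', (u, v) ∈ M₁ → p₂ v ≤ p₁ v → (u, v') ∈ M₂ → p₁ v' ≤ p₂ v' → v = v' := by
    intro u v v' h1 h2 h3 h4
    by_contra hne
    have a := (hd₁ u v h1).2.2 v' (Ne.symm hne) (hd₂ u v' h3).1
    have b := (hd₂ u v' h3).2.2 v hne (hd₁ u v h1).1
    linarith
  rcases X.eq_empty_or_nonempty with h0 | hne
  · refine ⟨∅, ∅, ⟨⟨by simp, by simp⟩, fun M' hM' => ?_⟩, by rw [h0]; simp⟩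
    have : M' = ∅ := by
      have := hM'.1
      simpa [restrictL] using this
    rw [this]
  haveI : Nonempty U := ⟨(key _ hne.choose_spec).choose⟩
  haveI : Nonempty V := ⟨hne.choose⟩
  have key' : ∀ v, ∃ u, v ∈ X →
      ((u, v) ∈ M₁ ∧ p₂ v ≤ p₁ v) ∨ ((u, v) ∈ M₂ ∧ p₁ v ≤ p₂ v) := by
    intro v
    by_cases hv : v ∈ X
    · obtain ⟨u, hu⟩ := key v hv
      exact ⟨u, fun _ => hu⟩
    · exact ⟨Classical.arbitrary U, fun h => absurd h hv⟩
  choose ν hν using key'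
  have hinj : Set.InjOn ν X := by
    intro a ha b hb hab
    rcases hν a ha with h | h <;> rcases hν b hb with h' | h'
    · rw [hab] at h
      exact congrArg Prod.snd (hM₁.1.2 _ h.1 _ h'.1 (Or.inl rfl))
    · rw [hab] at h
      exact clash _ _ _ h.1 h.2 h'.1 h'.2
    · rw [hab] at h
      exact (clash _ _ _ h'.1 h'.2 h.1 h.2).symm
    · rw [hab] at h
      exact congrArg Prod.snd (hM₂.1.2 _ h.1 _ h'.1 (Or.inl rfl))
  set p : V → ℝ := fun v => max (p₁ v) (p₂ v) with hp
  have hp0 : ∀ v, 0 ≤ p v := fun v => (hp₁ v).trans (le_max_left _ _)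
  have hpz : ∀ v, v ∉ X → p v = 0 := by
    intro v hv
    have hv' : v ∉ M₁.image Prod.snd ∧ v ∉ M₂.image Prod.snd := by
      constructor
      · exact fun h => hv (Finset.mem_union_left _ h)
      · exact fun h => hv (Finset.mem_union_right _ h)
    simp only [hp, hz₁ v hv'.1, hz₂ v hv'.2, max_self]
  have hdem : ∀ v ∈ X, (ν v, v) ∈ E ∧ p v ≤ w (ν v, v) ∧
      ∀ v', (ν v, v') ∈ E → w (ν v, v') - p v' ≤ w (ν v, v) - p v := by
    intro v hv
    rcases hν v hv with ⟨h, hle⟩ | ⟨h, hle⟩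
    · have hpv : p v = p₁ v := max_eq_left hle
      obtain ⟨a, b, c⟩ := hd₁ _ _ h
      refine ⟨a, by rw [hpv]; exact b, fun v' hE => ?_⟩
      by_cases hvv : v' = v
      · rw [hvv]
      · have := c v' hvv hE
        have h2 : p₁ v' ≤ p v' := le_max_left _ _
        linarith
    · have hpv : p v = p₂ v := max_eq_right hle
      obtain ⟨a, b, c⟩ := hd₂ _ _ h
      refine ⟨a, by rw [hpv]; exact b, fun v' hE => ?_⟩
      by_cases hvv : v' = v
      · rw [hvv]
      · have := c v' hvv hE
        have h2 : p₂ v' ≤ p v' := le_max_right _ _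
        linarith
  refine ⟨X.image ν, X.image (fun v => (ν v, v)), ⟨⟨?_, ?_⟩, ?_⟩, ?_⟩
  · intro e he
    obtain ⟨v, hv, rfl⟩ := Finset.mem_image.1 he
    exact Finset.mem_filter.2 ⟨(hdem v hv).1, Finset.mem_image_of_mem _ hv⟩
  · intro e₁ h₁ e₂ h₂ h
    obtain ⟨a, ha, rfl⟩ := Finset.mem_image.1 h₁
    obtain ⟨b, hb, rfl⟩ := Finset.mem_image.1 h₂
    have : a = b := by
      rcases h with h | h
      · exact hinj ha hb h
      · exact h
    rw [this]
  · intro M' hM'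
    have hk : ∀ u, ∃ v, u ∈ X.image ν → v ∈ X ∧ ν v = u := by
      intro u
      by_cases hu : u ∈ X.image ν
      · obtain ⟨v, hv, h⟩ := Finset.mem_image.1 hu
        exact ⟨v, fun _ => ⟨hv, h⟩⟩
      · exact ⟨Classical.arbitrary V, fun h => absurd h hu⟩
    choose k hk using hk
    set π : U → ℝ := fun u => w (u, k u) - p (k u) with hπ
    have hπν : ∀ v ∈ X, π (ν v) = w (ν v, v) - p v := by
      intro v hv
      obtain ⟨h1, h2⟩ := hk (ν v) (Finset.mem_image_of_mem _ hv)
      have : k (ν v) = v := hinj h1 hv h2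
      simp only [hπ, this]
    have hmem : ∀ e ∈ M', e ∈ E ∧ e.1 ∈ X.image ν := fun e he => Finset.mem_filter.1 (hM'.1 he)
    have hle : ∀ e ∈ M', w e ≤ π e.1 + p e.2 := by
      rintro ⟨u, v'⟩ he
      obtain ⟨hE, hu⟩ := hmem _ he
      obtain ⟨v, hv, hvu⟩ := Finset.mem_image.1 hu
      dsimp only at hvu
      subst hvu
      have := (hdem v hv).2.2 v' hE
      dsimp only
      rw [hπν v hv]
      linarith
    have hπ0 : ∀ u ∈ X.image ν, 0 ≤ π u := by
      intro u hu
      obtain ⟨v, hv, rfl⟩ := Finset.mem_image.1 hu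
      rw [hπν v hv]
      linarith [(hdem v hv).2.1]
    have s1 : ∑ e ∈ M', π e.1 ≤ ∑ u ∈ X.image ν, π u := by
      rw [← Finset.sum_image (s := M') (g := Prod.fst) (f := π)
        (fun a ha b hb h => hM'.2 a ha b hb (Or.inl h))]
      apply Finset.sum_le_sum_of_subset_of_nonneg
      · intro u hu
        obtain ⟨e, he, rfl⟩ := Finset.mem_image.1 hu
        exact (hmem e he).2
      · intro u hu _
        exact hπ0 u hu
    have s2 : ∑ e ∈ M', p e.2 ≤ ∑ v ∈ X, p v := by
      rw [← Finset.sum_image (s := M') (g := Prod.snd) (f := p)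
        (fun a ha b hb h => hM'.2 a ha b hb (Or.inr h)),
        Finset.sum_subset (Finset.subset_univ X) (fun v _ hv => hpz v hv)]
      exact Finset.sum_le_sum_of_subset_of_nonneg (Finset.subset_univ _) (fun v _ _ => hp0 v)
    have s3 : ∑ u ∈ X.image ν, π u = ∑ v ∈ X, w (ν v, v) - ∑ v ∈ X, p v := by
      rw [Finset.sum_image hinj, ← Finset.sum_sub_distrib]
      exact Finset.sum_congr rfl hπν
    have s4 : mWeight w (X.image (fun v => (ν v, v))) = ∑ v ∈ X, w (ν v, v) := by
      rw [mWeight, Finset.sum_image]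
      intro a _ b _ h
      exact congrArg Prod.snd h
    have s5 : mWeight w M' ≤ ∑ e ∈ M', (π e.1 + p e.2) := Finset.sum_le_sum hle
    rw [Finset.sum_add_distrib] at s5
    rw [s4]
    linarith
  · rw [Finset.image_image]
    ext v
    simp
end
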